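/- Let (X, w) be a tight Euclidean 2e-design on the union S of p concentric spheres in ℝⁿ, with ε_S = 1 if 0 ∈ S and ε_S = 0 otherwise. Then for every u ∈ X, Σ_{1 ≤ l ≤ e, 0 ≤ j ≤ min{p − ε_S − 1, ⌊(e−l)/2⌋}} ‖u‖^{2l} g_{l,j}(u)² Q_l(1) + Σ_{j=0}^{min{p−1, ⌊e/2⌋}} g_{0,j}(u)² = 1/w(u). -/

import Mathlib

/-!
The polynomials `F_{l,j,i}(x) = g_{l,j}(‖x‖²) φ_{l,i}(x)` with `l + 2j ≤ e` and `j < p` form an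
orthonormal basis of the functions on `X` for the weight `w`, and the identity is the diagonal of
the corresponding reproducing kernel: a square matrix with orthonormal rows has orthonormal columns,
so `w(u) ∑ F_{l,j,i}(u)² = 1` (`sum_sq_eq_one_of_orthonormal`). Summing over `i` with the addition
formula turns `∑ᵢ φ_{l,i}(u)²` into `‖u‖^{2l} Q_l(1)` (`sum_sq_harm`), and into `1` for `l = 0`.

Orthonormality (`sysPoly_orthonormal`): a product of two of these polynomials has degree at most
`2e`, so its weighted sum over `X` is a weighted sum of spherical means, on each of which the radial
factor is constant (`design_inner`). Harmonic forms of different degrees are orthogonal on the sphere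
(`harm_orthogonal`). This last fact is derived from the invariance of the spherical mean under plane
rotations: differentiating in the angle shows that the mean annihilates the angular derivations
`Xᵢ ∂ⱼ - Xⱼ ∂ᵢ`, which yields a divergence theorem (`map_divergence`) and hence Green's identity.

Square matrix (`card_sysIdx`): by tightness `|X| = dim Pol_e(S)`, and the system spans `Pol_e(S)`
(`polOn_eq_span`), by the decomposition of forms into `‖x‖^{2k} h` with `h` harmonic
(`harmonic_decomposition`) and because the `g_{l,j}` span all polynomials in `‖x‖²` of small degree,
while degrees `≥ p` reduce modulo the polynomial vanishing at all squared radii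
(`exists_pow_eq_sum`).

The truncation by `ε` needs no separate treatment: if `0 ∈ X` and `e ≥ 1`, the form `⟨·,·⟩_1` is
degenerate and has no `p` orthonormal polynomials (`zero_notMem_of_orthonormal`). Likewise the
existence of a normalized constant harmonic polynomial forces `n ≥ 1` and `0 < |S^{n-1}| < ∞`
(`sphere_measure_of_orthonormal`).
-/

open MeasureTheory Metric Finset
open scoped Classical RealInnerProductSpace

noncomputable section

/-- Euclidean `n`-space `ℝⁿ`. -/
abbrev Euc (n : ℕ) := EuclideanSpace ℝ (Fin n)

/-- Evaluation of a multivariate polynomial at a point of `ℝⁿ`. -/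
def evalPt {n : ℕ} (x : Euc n) (p : MvPolynomial (Fin n) ℝ) : ℝ :=
  MvPolynomial.eval (fun i => x i) p

/-- The normalized average (with respect to the `O(n)`-invariant surface measure,
i.e. the `(n-1)`-dimensional Hausdorff measure) of `f` over the sphere of radius `r`
centered at the origin; for `r = 0` it is `f 0`. -/
def sphAvg (n : ℕ) (r : ℝ) (f : Euc n → ℝ) : ℝ :=
  if r = 0 then f 0
  else ⨍ y in Metric.sphere (0 : Euc n) r, f y ∂(μH[(n : ℝ) - 1])

/-- `(X, w)` is a Euclidean `t`-design in `ℝⁿ`: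
`∑ᵢ (w(Xᵢ)/|Sᵢ|) ∫_{Sᵢ} f dσᵢ = ∑_{x ∈ X} w(x) f(x)` for all polynomials `f` of
degree at most `t`, where the `Sᵢ` are the concentric spheres supporting `X`. -/
def IsEuclideanDesign (n t : ℕ) (X : Finset (Euc n)) (w : Euc n → ℝ) : Prop :=
  ∀ p : MvPolynomial (Fin n) ℝ, p.totalDegree ≤ t →
    ∑ r ∈ X.image (fun x => ‖x‖),
        (∑ x ∈ X.filter (fun x => ‖x‖ = r), w x) * sphAvg n r (fun y => evalPt y p)
      = ∑ x ∈ X, w x * evalPt x p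

/-- Restriction of polynomials to a subset `S ⊆ ℝⁿ`, as a linear map. -/
def polyRestrict (n : ℕ) (S : Set (Euc n)) :
    MvPolynomial (Fin n) ℝ →ₗ[ℝ] (S → ℝ) where
  toFun p := fun x => evalPt (x : Euc n) p
  map_add' p q := by funext x; simp [evalPt]
  map_smul' c p := by funext x; simp [evalPt, MvPolynomial.smul_eval]

/-- `Pol_e(S)`: the space of restrictions to `S` of polynomials of total degree at most `e`. -/
def PolOn (n e : ℕ) (S : Set (Euc n)) : Submodule ℝ (S → ℝ) :=
  (MvPolynomial.restrictTotalDegree (Fin n) ℝ e).map (polyRestrict n S)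

/-- `dim Pol_e(S)`. -/
def dimPolOn (n e : ℕ) (S : Set (Euc n)) : ℕ := Module.finrank ℝ (PolOn n e S)

/-- The union of the concentric spheres (centered at the origin) supporting `X`. -/
def suppSpheres (n : ℕ) (X : Finset (Euc n)) : Set (Euc n) :=
  ⋃ r ∈ X.image (fun x => ‖x‖), Metric.sphere (0 : Euc n) r

/-- `(X, w)` is a tight Euclidean `2e`-design on `S` (the union of the concentric
spheres supporting `X`): it is a Euclidean `2e`-design with `|X| = dim Pol_e(S)`. -/
def IsTightOnS (n e : ℕ) (X : Finset (Euc n)) (w : Euc n → ℝ) : Prop :=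
  IsEuclideanDesign n (2 * e) X w ∧ X.card = dimPolOn n e (suppSpheres n X)

/-- `(X, w)` is a tight Euclidean `2e`-design: tight on `S` and moreover
`dim Pol_e(S) = dim Pol_e(ℝⁿ) = C(n+e, e)`. -/
def IsTightDesign (n e : ℕ) (X : Finset (Euc n)) (w : Euc n → ℝ) : Prop :=
  IsTightOnS n e X w ∧ dimPolOn n e (suppSpheres n X) = (n + e).choose e

/-- The Laplacian `Δ = ∑ᵢ ∂²/∂xᵢ²` on polynomials, as a linear map. -/
def lap (n : ℕ) : MvPolynomial (Fin n) ℝ →ₗ[ℝ] MvPolynomial (Fin n) ℝ :=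
  ∑ i : Fin n, ((MvPolynomial.pderiv i).toLinearMap ∘ₗ (MvPolynomial.pderiv i).toLinearMap)

/-- `Harm_l(ℝⁿ)`: the space of homogeneous harmonic polynomials of degree `l`. -/
def harmSub (n l : ℕ) : Submodule ℝ (MvPolynomial (Fin n) ℝ) :=
  MvPolynomial.homogeneousSubmodule (Fin n) ℝ l ⊓ LinearMap.ker (lap n)

/-- The normalized inner product `⟨φ, ψ⟩ = (1/|S^{n-1}|) ∫_{S^{n-1}} φψ dσ` of two
polynomials over the unit sphere. -/
def sphInner (n : ℕ) (φ ψ : MvPolynomial (Fin n) ℝ) : ℝ :=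
  ⨍ x in Metric.sphere (0 : Euc n) 1, (evalPt x φ * evalPt x ψ) ∂(μH[(n : ℝ) - 1])


/-! ### Harmonic polynomials -/

/-- The squared norm `∑ Xᵢ²` as a polynomial. -/
def rsq (n : ℕ) : MvPolynomial (Fin n) ℝ := ∑ i, MvPolynomial.X i ^ 2

theorem rsq_isHomogeneous (n : ℕ) : (rsq n).IsHomogeneous 2 :=
  MvPolynomial.IsHomogeneous.sum _ _ _ fun i _ => by
    simpa using (MvPolynomial.isHomogeneous_X ℝ i).pow 2

theorem pderiv_rsq (n : ℕ) (i : Fin n) :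
    MvPolynomial.pderiv i (rsq n) = 2 * MvPolynomial.X i := by
  simp only [rsq, map_sum, Derivation.leibniz_pow, MvPolynomial.pderiv_X]
  rw [Finset.sum_eq_single i]
  · simp
  · intro j _ hj
    simp [hj.symm]
  · simp

theorem lap_apply (n : ℕ) (f : MvPolynomial (Fin n) ℝ) :
    lap n f = ∑ i, MvPolynomial.pderiv i (MvPolynomial.pderiv i f) := by
  simp [lap]

theorem euler {n d : ℕ} {f : MvPolynomial (Fin n) ℝ} (hf : f.IsHomogeneous d) :
    ∑ i, MvPolynomial.X i * MvPolynomial.pderiv i f = (d : MvPolynomial (Fin n) ℝ) * f := by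
  rw [hf.sum_X_mul_pderiv, nsmul_eq_mul]

theorem lap_rsq_mul {n d : ℕ} {f : MvPolynomial (Fin n) ℝ} (hf : f.IsHomogeneous d) :
    lap n (rsq n * f) = (2 * n + 4 * d : MvPolynomial (Fin n) ℝ) * f + rsq n * lap n f := by
  have key : ∀ i, MvPolynomial.pderiv i (MvPolynomial.pderiv i (rsq n * f)) =
      2 * f + 4 * (MvPolynomial.X i * MvPolynomial.pderiv i f)
        + rsq n * MvPolynomial.pderiv i (MvPolynomial.pderiv i f) := by
    intro i
    have h2 : MvPolynomial.pderiv i (2 : MvPolynomial (Fin n) ℝ) = 0 := by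
      exact_mod_cast (MvPolynomial.pderiv i).map_natCast 2
    simp only [MvPolynomial.pderiv_mul, pderiv_rsq, map_add, h2, MvPolynomial.pderiv_X_self]
    ring
  rw [lap_apply, Finset.sum_congr rfl fun i _ => key i, Finset.sum_add_distrib,
    Finset.sum_add_distrib, ← Finset.mul_sum, ← Finset.mul_sum, euler hf, ← Finset.mul_sum, ← lap_apply]
  simp
  ring

/-- On harmonic polynomials of degree `l`, the Laplacian lowers powers of `‖x‖²` with a
positive factor. -/
theorem lap_rsq_pow_mul {n l : ℕ} {h : MvPolynomial (Fin n) ℝ} (hh : h ∈ harmSub n l) (k : ℕ) :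
    lap n (rsq n ^ (k + 1) * h) =
      (2 * (k + 1) * (n + 2 * l + 2 * k) : ℝ) • (rsq n ^ k * h) := by
  obtain ⟨hl, h0⟩ := hh
  have h0 : lap n h = 0 := h0
  have hl : h.IsHomogeneous l := hl
  have hk : ∀ k, (rsq n ^ k * h).IsHomogeneous (2 * k + l) := fun k =>
    ((rsq_isHomogeneous n).pow k).mul hl
  induction k with
  | zero =>
    rw [zero_add, pow_one, lap_rsq_mul hl, h0, MvPolynomial.smul_eq_C_mul]
    simp only [map_mul, map_add, map_natCast, map_one, map_ofNat, map_zero,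
      Nat.cast_zero, pow_zero]
    ring
  | succ k ih =>
    rw [pow_succ', mul_assoc, lap_rsq_mul (hk _), ih, MvPolynomial.smul_eq_C_mul,
      MvPolynomial.smul_eq_C_mul]
    simp only [map_mul, map_add, map_natCast, map_one, map_ofNat, Nat.cast_add, Nat.cast_mul,
      Nat.cast_ofNat, Nat.cast_one]
    ring

/-- Harmonic decomposition: every form is a combination of forms `‖x‖^{2j} h` with `h` harmonic. By
strong induction on the degree, `Δf` is such a combination, hence so is some `q` with `Δq = Δf`,
and `f - q` is harmonic. -/
theorem harmonic_decomposition {n : ℕ} (hn : 1 ≤ n) (d : ℕ) :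
    ∀ f : MvPolynomial (Fin n) ℝ, f.IsHomogeneous d →
      f ∈ Submodule.span ℝ
        {q | ∃ j l h, l + 2 * j = d ∧ h ∈ harmSub n l ∧ q = rsq n ^ j * h} := by
  induction d using Nat.strong_induction_on with
  | _ d ih =>
  intro f hf
  -- every element of the span in degree `d - 2` is the Laplacian of one in degree `d`
  have lift : ∀ d', d' + 2 = d → ∀ s ∈ Submodule.span ℝ
      {q | ∃ j l h, l + 2 * j = d' ∧ h ∈ harmSub n l ∧ q = rsq n ^ j * h},
      ∃ q ∈ Submodule.span ℝ
        {q | ∃ j l h, l + 2 * j = d ∧ h ∈ harmSub n l ∧ q = rsq n ^ j * h},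
        q.IsHomogeneous d ∧ lap n q = s := by
    intro d' hd s hs
    induction hs using Submodule.span_induction with
    | mem s hs =>
      obtain ⟨j, l, h, hjl, hh, rfl⟩ := hs
      have hc : (2 * (j + 1) * (n + 2 * l + 2 * j) : ℝ) ≠ 0 := by
        have : (1 : ℝ) ≤ n := by exact_mod_cast hn
        positivity
      refine ⟨(2 * (j + 1) * (n + 2 * l + 2 * j) : ℝ)⁻¹ • (rsq n ^ (j + 1) * h), ?_, ?_, ?_⟩
      · exact Submodule.smul_mem _ _
          (Submodule.subset_span ⟨j + 1, l, h, by omega, hh, rfl⟩)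
      · rw [MvPolynomial.smul_eq_C_mul]
        have := (MvPolynomial.isHomogeneous_C (Fin n)
          (2 * (j + 1) * (n + 2 * l + 2 * j) : ℝ)⁻¹).mul
          (((rsq_isHomogeneous n).pow (j + 1)).mul (show h.IsHomogeneous l from hh.1))
        convert this using 1
        omega
      · rw [map_smul, lap_rsq_pow_mul hh, smul_smul, inv_mul_cancel₀ hc, one_smul]
    | zero => exact ⟨0, Submodule.zero_mem _, MvPolynomial.isHomogeneous_zero _ _ _, map_zero _⟩
    | add a b _ _ ha hb =>
      obtain ⟨qa, ha1, ha2, ha3⟩ := ha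
      obtain ⟨qb, hb1, hb2, hb3⟩ := hb
      exact ⟨qa + qb, Submodule.add_mem _ ha1 hb1, ha2.add hb2, by rw [map_add, ha3, hb3]⟩
    | smul c a _ ha =>
      obtain ⟨qa, ha1, ha2, ha3⟩ := ha
      refine ⟨c • qa, Submodule.smul_mem _ _ ha1, ?_, by rw [map_smul, ha3]⟩
      exact (MvPolynomial.homogeneousSubmodule (Fin n) ℝ d).smul_mem c ha2
  have main : ∃ q ∈ Submodule.span ℝ
        {q | ∃ j l h, l + 2 * j = d ∧ h ∈ harmSub n l ∧ q = rsq n ^ j * h},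
        q.IsHomogeneous d ∧ lap n q = lap n f := by
    by_cases hd : 2 ≤ d
    · refine lift (d - 2) (by omega) _ (ih (d - 2) (by omega) _ ?_)
      rw [lap_apply]
      refine MvPolynomial.IsHomogeneous.sum _ _ _ fun i _ => ?_
      exact hf.pderiv.pderiv
    · refine ⟨0, Submodule.zero_mem _, MvPolynomial.isHomogeneous_zero _ _ _, ?_⟩
      rw [map_zero, lap_apply, Finset.sum_eq_zero]
      intro i _
      have h1 : (MvPolynomial.pderiv i f).IsHomogeneous 0 := by
        have := hf.pderiv (i := i)
        rwa [show d - 1 = 0 by omega] at this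
      rw [← MvPolynomial.totalDegree_zero_iff_isHomogeneous,
        MvPolynomial.totalDegree_eq_zero_iff_eq_C] at h1
      rw [h1, MvPolynomial.pderiv_C]
  obtain ⟨q, hq1, hq2, hq3⟩ := main
  have hfq : f - q ∈ harmSub n d := by
    refine ⟨hf.sub hq2, ?_⟩
    change lap n (f - q) = 0
    rw [map_sub, hq3, sub_self]
  have : f = q + rsq n ^ 0 * (f - q) := by simp
  rw [this]
  exact Submodule.add_mem _ hq1 (Submodule.subset_span ⟨0, d, f - q, by omega, hfq, rfl⟩)

/-! ### Rotation-invariant functionals -/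

/-- The substitution of the rotation by `θ` in the `(i, j)`-plane. -/
def rotSub {n : ℕ} (i j : Fin n) (θ : ℝ) :
    MvPolynomial (Fin n) ℝ →ₐ[ℝ] MvPolynomial (Fin n) ℝ :=
  MvPolynomial.aeval fun k =>
    if k = i then Real.cos θ • MvPolynomial.X i - Real.sin θ • MvPolynomial.X j
    else if k = j then Real.sin θ • MvPolynomial.X i + Real.cos θ • MvPolynomial.X j
    else MvPolynomial.X k

/-- The angular derivation `Xᵢ ∂ⱼ - Xⱼ ∂ᵢ`. -/
def angDer {n : ℕ} (i j : Fin n) (f : MvPolynomial (Fin n) ℝ) : MvPolynomial (Fin n) ℝ :=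
  MvPolynomial.X i * MvPolynomial.pderiv j f - MvPolynomial.X j * MvPolynomial.pderiv i f

theorem hasDerivAt_of_eq {f g : ℝ → ℝ} {a b θ : ℝ} (h : HasDerivAt g b θ)
    (hf : ∀ t, f t = g t) (hab : a = b) : HasDerivAt f a θ := by
  obtain rfl : f = g := funext hf
  exact hab ▸ h

/-- The angular derivation is the infinitesimal generator of the rotation, tested against an
arbitrary linear functional. The extra factor `q` makes the induction on `f` work without any
topology on polynomials. -/
theorem hasDerivAt_rotSub {n : ℕ} {i j : Fin n} (hij : i ≠ j) (L : MvPolynomial (Fin n) ℝ →ₗ[ℝ] ℝ)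
    (f : MvPolynomial (Fin n) ℝ) : ∀ (q : MvPolynomial (Fin n) ℝ) (θ : ℝ),
    HasDerivAt (fun θ => L (q * rotSub i j θ f)) (L (q * rotSub i j θ (angDer i j f))) θ := by
  induction f using MvPolynomial.induction_on with
  | C a =>
    intro q θ
    have h1 : ∀ θ, rotSub i j θ (MvPolynomial.C a) = MvPolynomial.C a := fun θ => by
      simp [rotSub, MvPolynomial.algebraMap_eq]
    simp only [h1, angDer, MvPolynomial.pderiv_C]
    simpa using hasDerivAt_const θ (L (q * MvPolynomial.C a))
  | add f g hf hg =>
    intro q θ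
    have := (hf q θ).add (hg q θ)
    refine hasDerivAt_of_eq this (fun t => ?_) ?_
    · simp [mul_add]
    · rw [← map_add, ← mul_add, ← map_add]; congr 3; simp only [angDer, map_add]; ring
  | mul_X f k hf =>
    intro q θ
    have hX : ∀ g, angDer i j (g * MvPolynomial.X k) = angDer i j g * MvPolynomial.X k +
        g * angDer i j (MvPolynomial.X k) := fun g => by
      simp only [angDer, MvPolynomial.pderiv_mul]; ring
    have hXi : ∀ t, rotSub i j t (MvPolynomial.X i) =
        Real.cos t • MvPolynomial.X i - Real.sin t • MvPolynomial.X j := fun t => by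
      simp [rotSub]
    have hXj : ∀ t, rotSub i j t (MvPolynomial.X j) =
        Real.sin t • MvPolynomial.X i + Real.cos t • MvPolynomial.X j := fun t => by
      simp [rotSub, hij.symm]
    have hDi : angDer i j (MvPolynomial.X i : MvPolynomial (Fin n) ℝ) = - MvPolynomial.X j := by
      simp [angDer, MvPolynomial.pderiv_X, hij]
    have hDj : angDer i j (MvPolynomial.X j : MvPolynomial (Fin n) ℝ) = MvPolynomial.X i := by
      simp [angDer, MvPolynomial.pderiv_X, hij.symm]
    have hi := hf (q * MvPolynomial.X i) θ
    have hj := hf (q * MvPolynomial.X j) θ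
    have hc := Real.hasDerivAt_cos θ
    have hs := Real.hasDerivAt_sin θ
    by_cases hki : k = i
    · subst hki
      refine hasDerivAt_of_eq ((hc.mul hi).sub (hs.mul hj)) (fun t => ?_) ?_
      · have e : q * rotSub k j t (f * MvPolynomial.X k) =
            Real.cos t • (q * MvPolynomial.X k * rotSub k j t f)
              - Real.sin t • (q * MvPolynomial.X j * rotSub k j t f) := by
          rw [map_mul, hXi]; simp only [MvPolynomial.smul_eq_C_mul]; ring
        rw [e, map_sub, map_smul, map_smul]; rfl
      · have e : q * rotSub k j θ (angDer k j (f * MvPolynomial.X k)) =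
            (-Real.sin θ) • (q * MvPolynomial.X k * rotSub k j θ f)
              + Real.cos θ • (q * MvPolynomial.X k * rotSub k j θ (angDer k j f))
              - (Real.cos θ • (q * MvPolynomial.X j * rotSub k j θ f)
              + Real.sin θ • (q * MvPolynomial.X j * rotSub k j θ (angDer k j f))) := by
          rw [hX, map_add, map_mul, map_mul, hDi, hXi, map_neg, hXj]
          simp only [MvPolynomial.smul_eq_C_mul, map_neg]; ring
        rw [e]; simp only [map_sub, map_add, map_smul, smul_eq_mul]
    · by_cases hkj : k = j
      · subst hkj
        refine hasDerivAt_of_eq ((hs.mul hi).add (hc.mul hj)) (fun t => ?_) ?_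
        · have e : q * rotSub i k t (f * MvPolynomial.X k) =
              Real.sin t • (q * MvPolynomial.X i * rotSub i k t f)
                + Real.cos t • (q * MvPolynomial.X k * rotSub i k t f) := by
            rw [map_mul, hXj]; simp only [MvPolynomial.smul_eq_C_mul]; ring
          rw [e, map_add, map_smul, map_smul]; rfl
        · have e : q * rotSub i k θ (angDer i k (f * MvPolynomial.X k)) =
              Real.cos θ • (q * MvPolynomial.X i * rotSub i k θ f)
                + Real.sin θ • (q * MvPolynomial.X i * rotSub i k θ (angDer i k f))
                + ((-Real.sin θ) • (q * MvPolynomial.X k * rotSub i k θ f)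
                + Real.cos θ • (q * MvPolynomial.X k * rotSub i k θ (angDer i k f))) := by
            rw [hX, map_add, map_mul, map_mul, hDj, hXi, hXj]
            simp only [MvPolynomial.smul_eq_C_mul, map_neg]; ring
          rw [e]; simp only [map_add, map_smul, smul_eq_mul]
      · have hXk : ∀ t, rotSub i j t (MvPolynomial.X k) = MvPolynomial.X k := fun t => by
          simp [rotSub, hki, hkj]
        have hDk : angDer i j (MvPolynomial.X k : MvPolynomial (Fin n) ℝ) = 0 := by
          simp [angDer, MvPolynomial.pderiv_X, Ne.symm hki, Ne.symm hkj]
        refine hasDerivAt_of_eq (hf (q * MvPolynomial.X k) θ) (fun t => ?_) ?_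
        · rw [map_mul (rotSub i j t), hXk]; congr 1; ring
        · rw [hX, hDk, mul_zero, add_zero, map_mul (rotSub i j θ), hXk]; congr 1; ring

theorem rotSub_zero {n : ℕ} {i j : Fin n} (f : MvPolynomial (Fin n) ℝ) :
    rotSub i j 0 f = f := by
  have : (fun k => if k = i then Real.cos 0 • MvPolynomial.X i - Real.sin 0 • MvPolynomial.X j
    else if k = j then Real.sin 0 • MvPolynomial.X i + Real.cos 0 • MvPolynomial.X j
    else (MvPolynomial.X k : MvPolynomial (Fin n) ℝ)) = MvPolynomial.X := by
    funext k
    split_ifs with h1 h2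
    · simp [h1]
    · simp [h2]
    · rfl
  rw [rotSub, this, MvPolynomial.aeval_X_left_apply]

/-- Rotation-invariant functionals annihilate angular derivatives. -/
theorem map_angDer {n : ℕ} (L : MvPolynomial (Fin n) ℝ →ₗ[ℝ] ℝ)
    (hrot : ∀ i j, i ≠ j → ∀ θ P, L (rotSub i j θ P) = L P) (i j : Fin n)
    (f : MvPolynomial (Fin n) ℝ) : L (angDer i j f) = 0 := by
  by_cases hij : i = j
  · subst hij; simp [angDer]
  have h1 := hasDerivAt_rotSub hij L f 1 0
  simp only [one_mul, hrot i j hij] at h1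
  exact h1.unique (hasDerivAt_const _ _)

/-- Spherical divergence theorem: for a vector field whose components satisfy Euler's identity with
degree `c`, the divergence has the same mean over the unit sphere as `n + c - 1` times the radial
component. With `|x|² = 1`, the difference is a sum of angular derivatives of the `Xᵢ F_k`. -/
theorem map_divergence {n : ℕ} (L : MvPolynomial (Fin n) ℝ →ₗ[ℝ] ℝ)
    (hrot : ∀ i j, i ≠ j → ∀ θ P, L (rotSub i j θ P) = L P)
    (hρ : ∀ P, L (rsq n * P) = L P) (c : ℝ) (F : Fin n → MvPolynomial (Fin n) ℝ)
    (hF : ∀ k, ∑ i, MvPolynomial.X i * MvPolynomial.pderiv i (F k) = c • F k) :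
    L (∑ k, MvPolynomial.pderiv k (F k)) =
      (n + c - 1) * L (∑ k, MvPolynomial.X k * F k) := by
  have h1 : ∀ k, ∑ i, angDer i k (MvPolynomial.X i * F k) =
      rsq n * MvPolynomial.pderiv k (F k) - (n + c - 1 : ℝ) • (MvPolynomial.X k * F k) := by
    intro k
    have h2 : ∀ i, angDer i k (MvPolynomial.X i * F k) =
        (if i = k then MvPolynomial.X i * F k else 0) +
        MvPolynomial.X i ^ 2 * MvPolynomial.pderiv k (F k) - MvPolynomial.X k * F k
        - MvPolynomial.X k * (MvPolynomial.X i * MvPolynomial.pderiv i (F k)) := by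
      intro i
      simp only [angDer, MvPolynomial.pderiv_mul, MvPolynomial.pderiv_X_self]
      split_ifs with h
      · subst h; simp; ring
      · rw [MvPolynomial.pderiv_X_of_ne h]; ring
    rw [Finset.sum_congr rfl fun i _ => h2 i, Finset.sum_sub_distrib, Finset.sum_sub_distrib,
      Finset.sum_add_distrib, ← Finset.sum_mul, ← Finset.mul_sum, ← Finset.mul_sum, hF k]
    simp only [rsq, Finset.sum_ite_eq', Finset.mem_univ, if_true, MvPolynomial.smul_eq_C_mul]
    simp
    ring
  have h3 : L (∑ k, ∑ i, angDer i k (MvPolynomial.X i * F k)) = 0 := by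
    simp [map_sum, map_angDer L hrot]
  rw [Finset.sum_congr rfl fun k _ => h1 k, Finset.sum_sub_distrib, ← Finset.mul_sum,
    ← Finset.smul_sum, map_sub, hρ, map_smul, smul_eq_mul] at h3
  linarith

theorem euler_pderiv {n l : ℕ} {h : MvPolynomial (Fin n) ℝ} (hh : h.IsHomogeneous l) (k : Fin n) :
    ∑ i, MvPolynomial.X i * MvPolynomial.pderiv i (MvPolynomial.pderiv k h) =
      (l - 1 : ℝ) • MvPolynomial.pderiv k h := by
  rw [euler hh.pderiv]
  rcases l with _ | l
  · rw [← MvPolynomial.totalDegree_zero_iff_isHomogeneous,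
        MvPolynomial.totalDegree_eq_zero_iff_eq_C] at hh
    rw [hh, MvPolynomial.pderiv_C]; simp
  · rw [MvPolynomial.smul_eq_C_mul]; simp

/-- Harmonic forms of different degrees are orthogonal: Green's identity gives
`(l' - l) (n + l + l' - 2) L(h h') = 0`, and when the second factor vanishes
(`n = 1`, `l + l' = 1`) the product is odd. -/
theorem harm_orthogonal {n : ℕ} (hn : 1 ≤ n) (L : MvPolynomial (Fin n) ℝ →ₗ[ℝ] ℝ)
    (hrot : ∀ i j, i ≠ j → ∀ θ P, L (rotSub i j θ P) = L P)
    (hodd : ∀ d P, Odd d → P.IsHomogeneous d → L P = 0)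
    (hρ : ∀ P, L (rsq n * P) = L P) {l l' : ℕ} (hll : l ≠ l')
    {h h' : MvPolynomial (Fin n) ℝ} (hh : h ∈ harmSub n l) (hh' : h' ∈ harmSub n l') :
    L (h * h') = 0 := by
  obtain ⟨h1, h2⟩ := hh
  obtain ⟨h1', h2'⟩ := hh'
  have h1 : h.IsHomogeneous l := h1
  have h1' : h'.IsHomogeneous l' := h1'
  have h2 : lap n h = 0 := h2
  have h2' : lap n h' = 0 := h2'
  rw [lap_apply] at h2 h2'
  by_cases hs : n + l + l' = 2
  · exact hodd (l + l') _ ⟨0, by omega⟩ (h1.mul h1')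
  have key := map_divergence L hrot hρ (l + l' - 1 : ℝ)
    (fun k => h * MvPolynomial.pderiv k h' - h' * MvPolynomial.pderiv k h) (by
      intro k
      have e : ∀ i, MvPolynomial.X i * MvPolynomial.pderiv i
            (h * MvPolynomial.pderiv k h' - h' * MvPolynomial.pderiv k h) =
          (MvPolynomial.X i * MvPolynomial.pderiv i h) * MvPolynomial.pderiv k h'
          + h * (MvPolynomial.X i * MvPolynomial.pderiv i (MvPolynomial.pderiv k h'))
          - (MvPolynomial.X i * MvPolynomial.pderiv i h') * MvPolynomial.pderiv k h
          - h' * (MvPolynomial.X i * MvPolynomial.pderiv i (MvPolynomial.pderiv k h)) := by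
        intro i
        simp only [map_sub, MvPolynomial.pderiv_mul]; ring
      rw [Finset.sum_congr rfl fun i _ => e i]
      simp only [Finset.sum_sub_distrib, Finset.sum_add_distrib]
      simp only [← Finset.mul_sum, ← Finset.sum_mul]
      rw [euler_pderiv h1, euler_pderiv h1', euler h1, euler h1']
      simp only [MvPolynomial.smul_eq_C_mul]
      simp
      ring)
  have hdiv : ∑ k, MvPolynomial.pderiv k
      (h * MvPolynomial.pderiv k h' - h' * MvPolynomial.pderiv k h) = 0 := by
    have e : ∀ k, MvPolynomial.pderiv k
        (h * MvPolynomial.pderiv k h' - h' * MvPolynomial.pderiv k h) =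
        h * MvPolynomial.pderiv k (MvPolynomial.pderiv k h')
          - h' * MvPolynomial.pderiv k (MvPolynomial.pderiv k h) := by
      intro k
      simp only [map_sub, MvPolynomial.pderiv_mul]; ring
    rw [Finset.sum_congr rfl fun i _ => e i, Finset.sum_sub_distrib, ← Finset.mul_sum,
      ← Finset.mul_sum, h2, h2']
    simp
  have hrad : ∑ k, MvPolynomial.X k *
      (h * MvPolynomial.pderiv k h' - h' * MvPolynomial.pderiv k h) =
      (l' - l : ℝ) • (h * h') := by
    have e : ∀ k, MvPolynomial.X k *
        (h * MvPolynomial.pderiv k h' - h' * MvPolynomial.pderiv k h) =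
        h * (MvPolynomial.X k * MvPolynomial.pderiv k h')
        - h' * (MvPolynomial.X k * MvPolynomial.pderiv k h) := fun k => by ring
    rw [Finset.sum_congr rfl fun i _ => e i, Finset.sum_sub_distrib, ← Finset.mul_sum,
      ← Finset.mul_sum, euler h1, euler h1', MvPolynomial.smul_eq_C_mul]
    simp
    ring
  rw [hdiv, hrad, map_zero, map_smul, smul_eq_mul] at key
  have n1 : (l' - l : ℝ) ≠ 0 := sub_ne_zero.2 (by exact_mod_cast hll.symm)
  have n2 : (n + (l + l' - 1) - 1 : ℝ) ≠ 0 := by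
    intro h0
    apply hs
    have : (n + l + l' : ℝ) = 2 := by linarith
    exact_mod_cast this
  simpa [n1, n2] using key.symm

/-! ### Means over spheres -/

section EvalPt

variable {n : ℕ} (x : Euc n)

theorem evalPt_add (f g : MvPolynomial (Fin n) ℝ) : evalPt x (f + g) = evalPt x f + evalPt x g := by
  simp [evalPt]

theorem evalPt_mul (f g : MvPolynomial (Fin n) ℝ) : evalPt x (f * g) = evalPt x f * evalPt x g := by
  simp [evalPt]

theorem evalPt_smul (c : ℝ) (f : MvPolynomial (Fin n) ℝ) : evalPt x (c • f) = c * evalPt x f := by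
  simp [evalPt, MvPolynomial.smul_eval]

theorem evalPt_rsq : evalPt x (rsq n) = ‖x‖ ^ 2 := by
  simp [evalPt, rsq, EuclideanSpace.norm_sq_eq]

theorem continuous_evalPt (f : MvPolynomial (Fin n) ℝ) : Continuous fun x : Euc n => evalPt x f := by
  unfold evalPt
  exact (MvPolynomial.continuous_eval f).comp (by fun_prop)

theorem evalPt_smul_point {d : ℕ} {f : MvPolynomial (Fin n) ℝ} (hf : f.IsHomogeneous d) (c : ℝ) :
    evalPt (c • x) f = c ^ d * evalPt x f := by
  simp only [evalPt, MvPolynomial.eval_eq', Finset.mul_sum]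
  refine Finset.sum_congr rfl fun m hm => ?_
  have h1 : ∑ i, m i = d := by
    have := hf (MvPolynomial.mem_support_iff.1 hm)
    rw [Finsupp.weight_apply, Finsupp.sum_fintype _ _ (by simp)] at this
    simpa using this
  simp only [PiLp.smul_apply, smul_eq_mul, mul_pow, Finset.prod_mul_distrib,
    Finset.prod_pow_eq_pow_sum, h1]
  ring

theorem evalPt_rotSub (i j : Fin n) (θ : ℝ) (f : MvPolynomial (Fin n) ℝ) :
    evalPt x (rotSub i j θ f) = evalPt (WithLp.toLp 2 fun k =>
      if k = i then Real.cos θ * x i - Real.sin θ * x j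
      else if k = j then Real.sin θ * x i + Real.cos θ * x j else x k) f := by
  induction f using MvPolynomial.induction_on with
  | C a => simp [rotSub, evalPt]
  | add f g hf hg => rw [map_add, evalPt_add, hf, hg, evalPt_add]
  | mul_X f k hf =>
    rw [map_mul, evalPt_mul, hf, evalPt_mul]
    congr 1
    simp only [rotSub, MvPolynomial.aeval_X, evalPt]
    split_ifs with h1 h2
    · simp [h1, MvPolynomial.smul_eval]
    · subst h2; simp [h1, MvPolynomial.smul_eval]
    · simp [h1, h2]

end EvalPt

theorem integrableOn_evalPt {n : ℕ}
    (hfin : (μH[(n : ℝ) - 1] : Measure (Euc n)) (Metric.sphere 0 1) ≠ ⊤)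
    (f : MvPolynomial (Fin n) ℝ) :
    IntegrableOn (fun x : Euc n => evalPt x f) (Metric.sphere 0 1) μH[(n : ℝ) - 1] := by
  obtain ⟨M, hM⟩ := (isCompact_sphere (0 : Euc n) 1).exists_bound_of_continuousOn
    (continuous_evalPt f).continuousOn
  refine Measure.integrableOn_of_bounded hfin
    (continuous_evalPt f).aestronglyMeasurable (M := M) ?_
  exact (ae_restrict_iff' Metric.isClosed_sphere.measurableSet).2 (Filter.Eventually.of_forall hM)

/-- The mean over the unit sphere, as a linear functional on polynomials. -/
def sphMean (n : ℕ) (hfin : (μH[(n : ℝ) - 1] : Measure (Euc n)) (Metric.sphere 0 1) ≠ ⊤) :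
    MvPolynomial (Fin n) ℝ →ₗ[ℝ] ℝ where
  toFun P := ⨍ x in Metric.sphere (0 : Euc n) 1, evalPt x P ∂(μH[(n : ℝ) - 1])
  map_add' f g := by
    simp only [setAverage_eq, evalPt_add]
    rw [integral_add (integrableOn_evalPt hfin f) (integrableOn_evalPt hfin g), smul_add]
  map_smul' c f := by
    simp only [setAverage_eq, evalPt_smul, integral_const_mul, smul_eq_mul, RingHom.id_apply]
    ring

theorem setAverage_comp_isometry {n : ℕ} (e : Euc n ≃ᵢ Euc n) (he : ∀ x, ‖e x‖ = ‖x‖)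
    (f : Euc n → ℝ) :
    ⨍ x in Metric.sphere (0 : Euc n) 1, f (e x) ∂(μH[(n : ℝ) - 1]) =
      ⨍ x in Metric.sphere (0 : Euc n) 1, f x ∂(μH[(n : ℝ) - 1]) := by
  have hpre : e ⁻¹' Metric.sphere (0 : Euc n) 1 = Metric.sphere (0 : Euc n) 1 := by
    ext x; simp only [Set.mem_preimage, mem_sphere_zero_iff_norm, he]
  have := (e.measurePreserving_hausdorffMeasure ((n : ℝ) - 1)).setIntegral_preimage_emb
    e.toHomeomorph.measurableEmbedding f (Metric.sphere (0 : Euc n) 1)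
  rw [hpre] at this
  rw [setAverage_eq, setAverage_eq, this]

/-- The rotation by `θ` in the `(i, j)`-plane. -/
def rotLin {n : ℕ} (i j : Fin n) (θ : ℝ) : Euc n →ₗ[ℝ] Euc n where
  toFun x := WithLp.toLp 2 fun k =>
      if k = i then Real.cos θ * x i - Real.sin θ * x j
      else if k = j then Real.sin θ * x i + Real.cos θ * x j else x k
  map_add' x y := by
    ext k
    simp only [PiLp.add_apply]
    split_ifs <;> ring
  map_smul' c x := by
    ext k
    simp only [PiLp.smul_apply, smul_eq_mul, RingHom.id_apply]
    split_ifs <;> ring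

theorem norm_rotLin {n : ℕ} {i j : Fin n} (hij : i ≠ j) (θ : ℝ) (x : Euc n) :
    ‖rotLin i j θ x‖ = ‖x‖ := by
  have h : ‖rotLin i j θ x‖ ^ 2 = ‖x‖ ^ 2 := by
    rw [EuclideanSpace.norm_sq_eq, EuclideanSpace.norm_sq_eq, ← sub_eq_zero,
      ← Finset.sum_sub_distrib]
    have h1 : ∀ k, ‖rotLin i j θ x k‖ ^ 2 - ‖x k‖ ^ 2 =
        (if k = i then (Real.cos θ * x i - Real.sin θ * x j) ^ 2 - x i ^ 2 else 0) +
        (if k = j then (Real.sin θ * x i + Real.cos θ * x j) ^ 2 - x j ^ 2 else 0) := by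
      intro k
      simp only [rotLin, LinearMap.coe_mk, AddHom.coe_mk, Real.norm_eq_abs, sq_abs]
      by_cases hi : k = i
      · subst hi; simp [hij]
      · by_cases hj : k = j
        · subst hj; simp [hi]
        · simp [hi, hj]
    rw [Finset.sum_congr rfl fun k _ => h1 k, Finset.sum_add_distrib]
    simp only [Finset.sum_ite_eq', Finset.mem_univ, if_true]
    linear_combination (x i ^ 2 + x j ^ 2) * Real.sin_sq_add_cos_sq θ
  exact (sq_eq_sq₀ (norm_nonneg _) (norm_nonneg _)).1 h

theorem sphMean_rotSub {n : ℕ}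
    (hfin : (μH[(n : ℝ) - 1] : Measure (Euc n)) (Metric.sphere 0 1) ≠ ⊤) (i j : Fin n)
    (hij : i ≠ j) (θ : ℝ) (P : MvPolynomial (Fin n) ℝ) :
    sphMean n hfin (rotSub i j θ P) = sphMean n hfin P := by
  let R : Euc n →ₗᵢ[ℝ] Euc n := ⟨rotLin i j θ, norm_rotLin hij θ⟩
  have := setAverage_comp_isometry (R.toLinearIsometryEquiv rfl).toIsometryEquiv
    (fun x => norm_rotLin hij θ x) (fun x => evalPt x P)
  simp only [sphMean, LinearMap.coe_mk, AddHom.coe_mk, evalPt_rotSub]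
  exact this

theorem sphMean_odd {n : ℕ}
    (hfin : (μH[(n : ℝ) - 1] : Measure (Euc n)) (Metric.sphere 0 1) ≠ ⊤) (d : ℕ)
    (P : MvPolynomial (Fin n) ℝ) (hd : Odd d) (hP : P.IsHomogeneous d) :
    sphMean n hfin P = 0 := by
  have h1 := setAverage_comp_isometry (LinearIsometryEquiv.neg ℝ (E := Euc n)).toIsometryEquiv
    (fun x => by simp) (fun x => evalPt x P)
  have h2 : sphMean n hfin ((-1 : ℝ) • P) = sphMean n hfin P := by
    simp only [sphMean, LinearMap.coe_mk, AddHom.coe_mk]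
    rw [← h1]
    congr 1
    funext x
    have := evalPt_smul_point x hP (-1)
    rw [hd.neg_one_pow] at this
    rw [evalPt_smul, ← this]
    simp
  rw [map_smul, smul_eq_mul] at h2
  linarith

theorem sphMean_congr {n : ℕ}
    (hfin : (μH[(n : ℝ) - 1] : Measure (Euc n)) (Metric.sphere 0 1) ≠ ⊤)
    {P P' : MvPolynomial (Fin n) ℝ} (h : ∀ x : Euc n, ‖x‖ = 1 → evalPt x P = evalPt x P') :
    sphMean n hfin P = sphMean n hfin P' := by
  simp only [sphMean, LinearMap.coe_mk, AddHom.coe_mk, setAverage_eq]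
  congr 1
  refine setIntegral_congr_fun Metric.isClosed_sphere.measurableSet fun x hx => ?_
  exact h x (by simpa using hx)

theorem sphMean_rsq_mul {n : ℕ}
    (hfin : (μH[(n : ℝ) - 1] : Measure (Euc n)) (Metric.sphere 0 1) ≠ ⊤)
    (P : MvPolynomial (Fin n) ℝ) : sphMean n hfin (rsq n * P) = sphMean n hfin P :=
  sphMean_congr hfin fun x hx => by rw [evalPt_mul, evalPt_rsq, hx]; ring

theorem sphMean_C {n : ℕ}
    (hfin : (μH[(n : ℝ) - 1] : Measure (Euc n)) (Metric.sphere 0 1) ≠ ⊤)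
    (hpos : (μH[(n : ℝ) - 1] : Measure (Euc n)) (Metric.sphere 0 1) ≠ 0) (c : ℝ) :
    sphMean n hfin (MvPolynomial.C c) = c := by
  simp only [sphMean, LinearMap.coe_mk, AddHom.coe_mk, evalPt, MvPolynomial.eval_C]
  exact setAverage_const hpos hfin c

open scoped Pointwise in
/-- Scaling: the mean over the sphere of radius `r` is the mean over the unit sphere of the
rescaled function, since the Hausdorff measure is homogeneous. -/
theorem setAverage_sphere_scale {n : ℕ} (hn : 1 ≤ n) {r : ℝ} (hr : 0 < r) (f : Euc n → ℝ) :
    ⨍ y in Metric.sphere (0 : Euc n) r, f y ∂(μH[(n : ℝ) - 1]) =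
      ⨍ y in Metric.sphere (0 : Euc n) 1, f (r • y) ∂(μH[(n : ℝ) - 1]) := by
  set μ : Measure (Euc n) := μH[(n : ℝ) - 1] with hμ
  let m : Euc n ≃ᵐ Euc n := (Homeomorph.smulOfNeZero r hr.ne').toMeasurableEquiv
  have hm : ∀ y, m y = r • y := fun y => rfl
  have hd : (0 : ℝ) ≤ (n : ℝ) - 1 := by
    have : (1 : ℝ) ≤ n := by exact_mod_cast hn
    linarith
  set c : NNReal := ‖r⁻¹‖₊ ^ ((n : ℝ) - 1) with hc
  have hc0 : (c : ℝ) ≠ 0 := by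
    rw [hc]
    have : (0 : ℝ) < ‖r⁻¹‖ := norm_pos_iff.2 (inv_ne_zero hr.ne')
    simpa using (Real.rpow_pos_of_pos (by simpa using this) _).ne'
  have hmap : Measure.map m μ = c • μ := by
    ext s hs
    rw [m.map_apply]
    have : m ⁻¹' s = r⁻¹ • s := by
      ext y
      rw [Set.mem_preimage, hm, Set.mem_inv_smul_set_iff₀ hr.ne']
    rw [this, hμ, Measure.hausdorffMeasure_smul₀ hd (inv_ne_zero hr.ne')]
    rfl
  have hpre : m ⁻¹' Metric.sphere (0 : Euc n) r = Metric.sphere (0 : Euc n) 1 := by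
    ext y
    simp only [Set.mem_preimage, hm, mem_sphere_zero_iff_norm, norm_smul, Real.norm_eq_abs,
      abs_of_pos hr]
    constructor
    · intro h; exact mul_left_cancel₀ hr.ne' (by rw [h, mul_one])
    · intro h; rw [h, mul_one]
  have hint : ∫ y in Metric.sphere (0 : Euc n) 1, f (r • y) ∂μ =
      c * ∫ y in Metric.sphere (0 : Euc n) r, f y ∂μ := by
    have := setIntegral_map_equiv (μ := μ) m f (Metric.sphere (0 : Euc n) r)
    rw [hmap, hpre, Measure.restrict_smul, integral_smul_nnreal_measure] at this
    exact this.symm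
  have hmeas : μ.real (Metric.sphere (0 : Euc n) 1) = c * μ.real (Metric.sphere (0 : Euc n) r) := by
    have := congrArg (fun ν : Measure (Euc n) => ν.real (Metric.sphere (0 : Euc n) r)) hmap
    simp only [Measure.real, m.map_apply, hpre] at this
    rw [Measure.real, this]
    simp [Measure.real]
  rw [setAverage_eq, setAverage_eq, hint, hmeas, smul_eq_mul, smul_eq_mul, mul_inv]
  field_simp

theorem sphAvg_homogeneous {n : ℕ} (hn : 1 ≤ n)
    (hfin : (μH[(n : ℝ) - 1] : Measure (Euc n)) (Metric.sphere 0 1) ≠ ⊤)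
    (hpos : (μH[(n : ℝ) - 1] : Measure (Euc n)) (Metric.sphere 0 1) ≠ 0) {d : ℕ}
    {P : MvPolynomial (Fin n) ℝ} (hP : P.IsHomogeneous d) {r : ℝ} (hr : 0 ≤ r) :
    sphAvg n r (fun y => evalPt y P) = r ^ d * sphMean n hfin P := by
  rcases hr.eq_or_lt with rfl | hr
  · rw [sphAvg, if_pos rfl]
    rcases Nat.eq_zero_or_pos d with rfl | hd
    · rw [← MvPolynomial.totalDegree_zero_iff_isHomogeneous,
        MvPolynomial.totalDegree_eq_zero_iff_eq_C] at hP
      rw [hP, sphMean_C hfin hpos]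
      simp [evalPt]
    · have := evalPt_smul_point (0 : Euc n) hP 0
      rw [zero_pow hd.ne', zero_mul, smul_zero] at this
      rw [this, zero_pow hd.ne', zero_mul]
  · rw [sphAvg, if_neg hr.ne', setAverage_sphere_scale hn hr]
    simp only [evalPt_smul_point _ hP]
    rw [← smul_eq_mul, ← map_smul]
    simp only [sphMean, LinearMap.coe_mk, AddHom.coe_mk, evalPt_smul]

/-! ### Radial factors -/

theorem evalPt_aeval_rsq {n : ℕ} (x : Euc n) (G : Polynomial ℝ) :
    evalPt x (Polynomial.aeval (rsq n) G) = G.eval (‖x‖ ^ 2) := by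
  have h := Polynomial.hom_eval₂ G (algebraMap ℝ (MvPolynomial (Fin n) ℝ))
    (MvPolynomial.eval fun i => x i) (rsq n)
  rw [Polynomial.aeval_def, evalPt, h, ← evalPt_rsq]
  have : (MvPolynomial.eval fun i => x i).comp (algebraMap ℝ (MvPolynomial (Fin n) ℝ)) =
      RingHom.id ℝ := by
    ext a; simp
  rw [this]
  rfl

theorem totalDegree_aeval_rsq_le (n : ℕ) (G : Polynomial ℝ) :
    (Polynomial.aeval (rsq n) G).totalDegree ≤ 2 * G.natDegree := by
  rw [Polynomial.aeval_eq_sum_range]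
  refine MvPolynomial.totalDegree_finsetSum_le fun k hk => ?_
  refine (MvPolynomial.totalDegree_smul_le _ _).trans ?_
  refine (MvPolynomial.totalDegree_pow _ _).trans ?_
  have h1 := (rsq_isHomogeneous n).totalDegree_le
  have h2 := Finset.mem_range.1 hk
  calc k * (rsq n).totalDegree ≤ k * 2 := Nat.mul_le_mul_left _ h1
    _ ≤ _ := by omega

theorem sphAvg_aeval_rsq_mul {n : ℕ} {r : ℝ} (G : Polynomial ℝ)
    (P : MvPolynomial (Fin n) ℝ) :
    sphAvg n r (fun y => evalPt y (Polynomial.aeval (rsq n) G * P)) =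
      G.eval (r ^ 2) * sphAvg n r (fun y => evalPt y P) := by
  simp only [evalPt_mul, evalPt_aeval_rsq]
  unfold sphAvg
  split_ifs with h
  · rw [h]; simp
  · simp only [setAverage_eq, smul_eq_mul]
    rw [setIntegral_congr_fun (g := fun y => G.eval (r ^ 2) * evalPt y P)
      Metric.isClosed_sphere.measurableSet, integral_const_mul]
    · ring
    · intro y hy
      rw [mem_sphere_zero_iff_norm] at hy
      simp only [hy]

theorem sum_eval_combination {β : Type*} (s : Finset β) (W y : β → ℝ) (v : ℕ → Polynomial ℝ)
    {k : ℕ} {c : ℕ → ℝ} {P : Polynomial ℝ} (hP : P = ∑ j ∈ Finset.range k, c j • v j)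
    (q : β → ℝ) :
    ∑ x ∈ s, W x * P.eval (y x) * q x =
      ∑ j ∈ Finset.range k, c j * ∑ x ∈ s, W x * (v j).eval (y x) * q x := by
  subst hP
  simp only [Finset.mul_sum]
  rw [Finset.sum_comm]
  refine Finset.sum_congr rfl fun x _ => ?_
  simp only [Polynomial.eval_finsetSum, Polynomial.eval_smul, smul_eq_mul, Finset.mul_sum,
    Finset.sum_mul]
  exact Finset.sum_congr rfl fun j _ => by ring

/-- Polynomials of degree at most `j` that are orthonormal for a (possibly degenerate) discrete
bilinear form span all polynomials of degree less than `k`: orthonormality forces the `j`-th one to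
have degree exactly `j`. -/
theorem exists_eq_sum_of_orthonormal {β : Type*} (s : Finset β) (W y : β → ℝ)
    (v : ℕ → Polynomial ℝ) (k : ℕ) (hdeg : ∀ j < k, (v j).natDegree ≤ j)
    (hon : ∀ j < k, ∀ j' < k, ∑ x ∈ s, W x * (v j).eval (y x) * (v j').eval (y x) =
      if j = j' then 1 else 0) :
    ∀ P : Polynomial ℝ, P.degree < k → ∃ c : ℕ → ℝ, P = ∑ j ∈ Finset.range k, c j • v j := by
  induction k with
  | zero =>
    intro P hP
    refine ⟨0, ?_⟩
    simpa [Polynomial.degree_eq_bot] using hP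
  | succ k ih =>
    have ih := ih (fun j hj => hdeg j (by omega)) (fun j hj j' hj' => hon j (by omega) j' (by omega))
    have hvk : (v k).coeff k ≠ 0 := by
      intro h0
      obtain ⟨c, hc⟩ := ih (v k) (by
        rw [Polynomial.degree_lt_iff_coeff_zero]
        intro m hm
        rcases hm.eq_or_lt with rfl | hm
        · exact h0
        · exact Polynomial.coeff_eq_zero_of_natDegree_lt ((hdeg k (by omega)).trans_lt hm))
      have h1 := hon k (by omega) k (by omega)
      have h2 := sum_eval_combination s W y v hc (fun x => (v k).eval (y x))
      rw [h1, if_pos rfl, Finset.sum_eq_zero] at h2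
      · exact one_ne_zero h2
      · intro j hj
        rw [Finset.mem_range] at hj
        rw [hon j (by omega) k (by omega), if_neg hj.ne, mul_zero]
    intro P hP
    obtain ⟨c, hc⟩ := ih (P - (P.coeff k / (v k).coeff k) • v k) (by
      rw [Polynomial.degree_lt_iff_coeff_zero] at hP ⊢
      intro m hm
      rw [Polynomial.coeff_sub, Polynomial.coeff_smul, smul_eq_mul]
      rcases hm.eq_or_lt with rfl | hm
      · field_simp; ring
      · rw [hP m hm, Polynomial.coeff_eq_zero_of_natDegree_lt ((hdeg k (by omega)).trans_lt hm)]
        ring)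
    refine ⟨fun j => if j = k then P.coeff k / (v k).coeff k else c j, ?_⟩
    simp only [Finset.sum_range_succ, if_true]
    rw [← sub_eq_iff_eq_add, hc]
    refine Finset.sum_congr rfl fun j hj => ?_
    rw [if_neg (Finset.mem_range.1 hj).ne]

/-- The monic polynomial vanishing at the squares of the radii in `R`. -/
def radPoly (R : Finset ℝ) : Polynomial ℝ := ∏ r ∈ R, (Polynomial.X - Polynomial.C (r ^ 2))

theorem radPoly_monic (R : Finset ℝ) : (radPoly R).Monic :=
  Polynomial.monic_prod_of_monic _ _ fun _ _ => Polynomial.monic_X_sub_C _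

theorem degree_radPoly (R : Finset ℝ) : (radPoly R).degree = R.card := by
  simp only [radPoly, Polynomial.degree_prod, Polynomial.degree_X_sub_C]
  simp

theorem eval_radPoly {R : Finset ℝ} {r : ℝ} (hr : r ∈ R) : (radPoly R).eval (r ^ 2) = 0 := by
  rw [radPoly, Polynomial.eval_prod]
  exact Finset.prod_eq_zero hr (by simp)

/-- If `0 ∈ X`, the weights `w(x)‖x‖^{2l}` with `l ≥ 1` charge only `p - 1` radii, so there cannot be
`p` orthonormal polynomials in `‖x‖²`. -/
theorem zero_notMem_of_orthonormal {n l : ℕ} (hl : l ≠ 0) {X : Finset (Euc n)} {w : Euc n → ℝ}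
    {p : ℕ} (hp : p = (X.image (fun x => ‖x‖)).card) (v : ℕ → Polynomial ℝ)
    (hdeg : ∀ j < p, (v j).natDegree ≤ j)
    (hon : ∀ j < p, ∀ j' < p,
      (∑ x ∈ X, w x * ‖x‖ ^ (2 * l) * (v j).eval (‖x‖ ^ 2) * (v j').eval (‖x‖ ^ 2))
        = if j = j' then 1 else 0) : (0 : Euc n) ∉ X := by
  intro h0
  set R := (X.image (fun x => ‖x‖)).erase 0 with hR
  have h0' : (0 : ℝ) ∈ X.image (fun x => ‖x‖) := Finset.mem_image.2 ⟨0, h0, norm_zero⟩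
  have hcard : R.card < p := by
    rw [hp]; exact Finset.card_erase_lt_of_mem h0'
  obtain ⟨c, hc⟩ := exists_eq_sum_of_orthonormal X (fun x => w x * ‖x‖ ^ (2 * l))
    (fun x => ‖x‖ ^ 2) v p hdeg hon (radPoly R) (by
      rw [degree_radPoly]; exact_mod_cast hcard)
  have hz : ∀ x ∈ X, w x * ‖x‖ ^ (2 * l) * (radPoly R).eval (‖x‖ ^ 2) = 0 := by
    intro x hx
    by_cases hx0 : ‖x‖ = 0
    · rw [hx0, zero_pow (by omega)]; ring
    · rw [eval_radPoly (Finset.mem_erase.2 ⟨hx0, Finset.mem_image_of_mem _ hx⟩), mul_zero]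
  have hcz : ∀ j < p, c j = 0 := by
    intro j hj
    have h1 := sum_eval_combination X (fun x => w x * ‖x‖ ^ (2 * l)) (fun x => ‖x‖ ^ 2) v hc
      (fun x => (v j).eval (‖x‖ ^ 2))
    rw [Finset.sum_eq_zero fun x hx => by rw [hz x hx, zero_mul],
      Finset.sum_congr rfl fun i hi => by rw [hon i (Finset.mem_range.1 hi) j hj]] at h1
    simpa [hj] using h1.symm
  refine (radPoly_monic R).ne_zero ?_
  rw [hc]
  exact Finset.sum_eq_zero fun j hj => by rw [hcz j (Finset.mem_range.1 hj), zero_smul]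

/-- On `p` concentric spheres the powers `‖x‖^{2k}`, `k ≤ m`, are combinations of the first
`min p (m + 1)` orthonormal polynomials; powers `k ≥ p` are reduced modulo the polynomial vanishing
at all squared radii. -/
theorem exists_pow_eq_sum {n l : ℕ} {X : Finset (Euc n)} {w : Euc n → ℝ}
    {p : ℕ} (hp : p = (X.image (fun x => ‖x‖)).card) (v : ℕ → Polynomial ℝ)
    (hdeg : ∀ j < p, (v j).natDegree ≤ j)
    (hon : ∀ j < p, ∀ j' < p,
      (∑ x ∈ X, w x * ‖x‖ ^ (2 * l) * (v j).eval (‖x‖ ^ 2) * (v j').eval (‖x‖ ^ 2))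
        = if j = j' then 1 else 0) {k m : ℕ} (hk : k ≤ m) :
    ∃ c : ℕ → ℝ, ∀ r ∈ X.image (fun x => ‖x‖),
      (r ^ 2) ^ k = ∑ j ∈ Finset.range (min p (m + 1)), c j * (v j).eval (r ^ 2) := by
  set R := X.image (fun x => ‖x‖) with hR
  obtain ⟨P, hPdeg, hP⟩ : ∃ P : Polynomial ℝ, P.degree < (min p (m + 1) : ℕ) ∧
      ∀ r ∈ R, P.eval (r ^ 2) = (r ^ 2) ^ k := by
    by_cases hkp : k < p
    · refine ⟨Polynomial.X ^ k, ?_, by simp⟩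
      rw [Polynomial.degree_X_pow]
      exact_mod_cast lt_min hkp (by omega)
    · refine ⟨Polynomial.X ^ k %ₘ radPoly R, ?_, fun r hr => ?_⟩
      · have := Polynomial.degree_modByMonic_lt (Polynomial.X ^ k) (radPoly_monic R)
        rwa [degree_radPoly, ← hp, ← min_eq_left (show p ≤ m + 1 by omega)] at this
      · have := congrArg (Polynomial.eval (r ^ 2))
          (Polynomial.modByMonic_add_div (Polynomial.X ^ k) (radPoly R))
        simpa [eval_radPoly hr] using this
  obtain ⟨c, hc⟩ := exists_eq_sum_of_orthonormal X (fun x => w x * ‖x‖ ^ (2 * l))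
    (fun x => ‖x‖ ^ 2) v (min p (m + 1))
    (fun j hj => hdeg j (lt_of_lt_of_le hj (min_le_left _ _)))
    (fun j hj j' hj' => hon j (lt_of_lt_of_le hj (min_le_left _ _)) j'
      (lt_of_lt_of_le hj' (min_le_left _ _))) P hPdeg
  refine ⟨c, fun r hr => ?_⟩
  rw [← hP r hr, hc]
  simp [Polynomial.eval_finsetSum]

/-! ### Finite-dimensional linear algebra -/

/-- A square matrix with orthonormal rows has orthonormal columns (weighted version). -/
theorem sum_sq_eq_one_of_orthonormal {α β : Type*} [Fintype α] [Fintype β]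
    (hcard : Fintype.card α = Fintype.card β) (F : α → β → ℝ) (w : β → ℝ)
    (hon : ∀ a b, ∑ x, w x * F a x * F b x = if a = b then 1 else 0) (u : β) :
    w u * ∑ a, F a u ^ 2 = 1 := by
  let A : Matrix α β ℝ := Matrix.of fun a x => w x * F a x
  let B : Matrix β α ℝ := Matrix.of fun x b => F b x
  have hAB : A * B = 1 := by
    ext a b
    rw [Matrix.mul_apply, Matrix.one_apply]
    exact hon a b
  have hBA : B * A = 1 := (Matrix.mul_eq_one_comm_of_card_eq (m := α) (n := β) (R := ℝ) hcard).1 hAB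
  have := congrFun (congrFun hBA u) u
  rw [Matrix.mul_apply, Matrix.one_apply_eq] at this
  rw [← this, Finset.mul_sum]
  exact Finset.sum_congr rfl fun a _ => by simp only [A, B, Matrix.of_apply]; ring

theorem harm_mem_span {n l : ℕ} (L : MvPolynomial (Fin n) ℝ →ₗ[ℝ] ℝ)
    (φ : Fin (Module.finrank ℝ (harmSub n l)) → MvPolynomial (Fin n) ℝ)
    (hφmem : ∀ i, φ i ∈ harmSub n l)
    (hφon : ∀ i i', L (φ i * φ i') = if i = i' then 1 else 0) :
    harmSub n l ≤ Submodule.span ℝ (Set.range φ) := by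
  have hli : LinearIndependent ℝ fun i => (⟨φ i, hφmem i⟩ : harmSub n l) := by
    refine LinearIndependent.of_comp (harmSub n l).subtype ?_
    rw [Fintype.linearIndependent_iff]
    intro c hc i
    have h := congrArg (fun P => L (P * φ i)) hc
    simpa [Finset.sum_mul, hφon] using h
  have : Module.Finite ℝ (harmSub n l) := by
    refine Submodule.finiteDimensional_of_le (S₂ := MvPolynomial.restrictTotalDegree (Fin n) ℝ l) ?_
    intro f hf
    rw [MvPolynomial.mem_restrictTotalDegree]
    exact MvPolynomial.IsHomogeneous.totalDegree_le hf.1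
  have htop := hli.span_eq_top_of_card_eq_finrank' (by simp)
  intro h hh
  have h1 : (⟨h, hh⟩ : harmSub n l) ∈ Submodule.span ℝ
      (Set.range fun i => (⟨φ i, hφmem i⟩ : harmSub n l)) := htop ▸ Submodule.mem_top
  have h2 := Submodule.mem_map_of_mem (f := (harmSub n l).subtype) h1
  rw [Submodule.map_span, ← Set.range_comp] at h2
  exact h2

theorem harm_zero {n : ℕ} {h : MvPolynomial (Fin n) ℝ} (hh : h ∈ harmSub n 0) :
    ∃ c, h = MvPolynomial.C c := by
  have h1 : h.IsHomogeneous 0 := hh.1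
  rw [← MvPolynomial.totalDegree_zero_iff_isHomogeneous,
    MvPolynomial.totalDegree_eq_zero_iff_eq_C] at h1
  exact ⟨_, h1⟩

theorem finrank_harm_zero (n : ℕ) : Module.finrank ℝ (harmSub n 0) = 1 := by
  have : harmSub n 0 = Submodule.span ℝ {(1 : MvPolynomial (Fin n) ℝ)} := by
    ext h
    rw [Submodule.mem_span_singleton]
    constructor
    · intro hh
      obtain ⟨c, rfl⟩ := harm_zero hh
      exact ⟨c, by rw [MvPolynomial.smul_eq_C_mul, mul_one]⟩
    · rintro ⟨c, rfl⟩
      refine Submodule.smul_mem _ _ ⟨MvPolynomial.isHomogeneous_one _ _, ?_⟩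
      simp [lap_apply]
  rw [this, finrank_span_singleton one_ne_zero]

/-! ### The orthonormal system on a tight design -/

theorem sphInner_eq_sphMean {n : ℕ}
    (hfin : (μH[(n : ℝ) - 1] : Measure (Euc n)) (Metric.sphere 0 1) ≠ ⊤)
    (φ ψ : MvPolynomial (Fin n) ℝ) : sphInner n φ ψ = sphMean n hfin (φ * ψ) := by
  simp only [sphInner, sphMean, LinearMap.coe_mk, AddHom.coe_mk, evalPt_mul]

/-- Existence of a normalized constant forces `n ≥ 1` and `0 < |S^{n-1}| < ∞`, since otherwise all
averages over the unit sphere are zero by convention. -/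
theorem sphere_measure_of_orthonormal {n : ℕ} {φ : MvPolynomial (Fin n) ℝ}
    (hφ : φ ∈ harmSub n 0) (hon : sphInner n φ φ = 1) :
    1 ≤ n ∧ (μH[(n : ℝ) - 1] : Measure (Euc n)) (Metric.sphere 0 1) ≠ ⊤ ∧
      (μH[(n : ℝ) - 1] : Measure (Euc n)) (Metric.sphere 0 1) ≠ 0 := by
  have hreal : (μH[(n : ℝ) - 1] : Measure (Euc n)).real (Metric.sphere 0 1) ≠ 0 := by
    intro h0
    rw [sphInner, setAverage_eq, h0, inv_zero, zero_smul] at hon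
    exact zero_ne_one hon
  have hpos : (μH[(n : ℝ) - 1] : Measure (Euc n)) (Metric.sphere 0 1) ≠ 0 := fun h =>
    hreal (by rw [Measure.real, h]; rfl)
  refine ⟨?_, fun h => hreal (by rw [Measure.real, h]; rfl), hpos⟩
  by_contra hn
  obtain rfl : n = 0 := by omega
  apply hpos
  have : (Metric.sphere (0 : Euc 0) 1) = ∅ := by
    ext x
    have : x = 0 := Subsingleton.elim _ _
    simp [this]
  rw [this, measure_empty]

/-- On a design, the inner product of `G(‖x‖²) ψ(x)` and `G'(‖x‖²) ψ'(x)` splits into a radial and a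
spherical factor: the design property moves the sum to the spheres, where the radial factors are
constant. -/
theorem design_inner {n e : ℕ} {X : Finset (Euc n)} {w : Euc n → ℝ}
    (ht : IsEuclideanDesign n (2 * e) X w) (hn : 1 ≤ n)
    (hfin : (μH[(n : ℝ) - 1] : Measure (Euc n)) (Metric.sphere 0 1) ≠ ⊤)
    (hpos : (μH[(n : ℝ) - 1] : Measure (Euc n)) (Metric.sphere 0 1) ≠ 0)
    {l l' j j' : ℕ} {G G' : Polynomial ℝ} (hG : G.natDegree ≤ j) (hG' : G'.natDegree ≤ j')
    (hlj : l + 2 * j ≤ e) (hlj' : l' + 2 * j' ≤ e) {ψ ψ' : MvPolynomial (Fin n) ℝ}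
    (hψ : ψ.IsHomogeneous l) (hψ' : ψ'.IsHomogeneous l') :
    ∑ x ∈ X, w x * evalPt x (Polynomial.aeval (rsq n) G * ψ) *
        evalPt x (Polynomial.aeval (rsq n) G' * ψ') =
      (∑ x ∈ X, w x * ‖x‖ ^ (l + l') * G.eval (‖x‖ ^ 2) * G'.eval (‖x‖ ^ 2)) *
        sphMean n hfin (ψ * ψ') := by
  have hd : (Polynomial.aeval (rsq n) (G * G') * (ψ * ψ')).totalDegree ≤ 2 * e := by
    refine (MvPolynomial.totalDegree_mul _ _).trans ?_
    have h1 := totalDegree_aeval_rsq_le n (G * G')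
    have h2 := Polynomial.natDegree_mul_le (p := G) (q := G')
    have h3 := (hψ.mul hψ').totalDegree_le
    omega
  have h := ht _ hd
  have h1 : ∀ x ∈ X, w x * evalPt x (Polynomial.aeval (rsq n) G * ψ) *
      evalPt x (Polynomial.aeval (rsq n) G' * ψ') =
      w x * evalPt x (Polynomial.aeval (rsq n) (G * G') * (ψ * ψ')) := by
    intro x _
    simp only [map_mul, evalPt_mul]
    ring
  rw [Finset.sum_congr rfl h1, ← h]
  rw [← Finset.sum_fiberwise_of_maps_to (s := X) (t := X.image fun x => ‖x‖) (g := fun x => ‖x‖)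
    (fun x hx => Finset.mem_image_of_mem _ hx), Finset.sum_mul]
  refine Finset.sum_congr rfl fun r hr => ?_
  have hr0 : 0 ≤ r := by
    obtain ⟨x, -, rfl⟩ := Finset.mem_image.1 hr
    exact norm_nonneg x
  rw [sphAvg_aeval_rsq_mul, sphAvg_homogeneous hn hfin hpos (hψ.mul hψ') hr0, Finset.sum_mul,
    Finset.sum_mul]
  refine Finset.sum_congr rfl fun x hx => ?_
  rw [(Finset.mem_filter.1 hx).2, Polynomial.eval_mul]
  ring

/-- Indices `(l, j, i)` of the system `g_{l,j}(‖x‖²) φ_{l,i}(x)`. -/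
abbrev SysIdx (n e p : ℕ) : Type :=
  Σ l : Fin (e + 1), Fin (min p ((e - l) / 2 + 1)) × Fin (Module.finrank ℝ (harmSub n l))

/-- The polynomial `g_{l,j}(‖x‖²) φ_{l,i}(x)`. -/
def sysPoly {n e p : ℕ} (g : ℕ → ℕ → Polynomial ℝ)
    (φ : (l : ℕ) → Fin (Module.finrank ℝ (harmSub n l)) → MvPolynomial (Fin n) ℝ)
    (a : SysIdx n e p) : MvPolynomial (Fin n) ℝ :=
  Polynomial.aeval (rsq n) (g a.1 a.2.1) * φ a.1 a.2.2

/-- Restrictions of polynomials of degree at most `e` to the supporting spheres are combinations of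
the system: decompose into `‖x‖^{2k} h` with `h` harmonic and expand both factors. -/
theorem polOn_eq_span {n e : ℕ} (hn : 1 ≤ n) {X : Finset (Euc n)} {w : Euc n → ℝ}
    (hfin : (μH[(n : ℝ) - 1] : Measure (Euc n)) (Metric.sphere 0 1) ≠ ⊤)
    {p : ℕ} (hp : p = (X.image (fun x => ‖x‖)).card)
    {g : ℕ → ℕ → Polynomial ℝ}
    (hgdeg : ∀ l ≤ e, ∀ j < p, (g l j).natDegree ≤ j)
    (hgon : ∀ l ≤ e, ∀ j < p, ∀ j' < p,
      (∑ x ∈ X, w x * ‖x‖ ^ (2 * l) * (g l j).eval (‖x‖ ^ 2) * (g l j').eval (‖x‖ ^ 2))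
        = if j = j' then 1 else 0)
    {φ : (l : ℕ) → Fin (Module.finrank ℝ (harmSub n l)) → MvPolynomial (Fin n) ℝ}
    (hφmem : ∀ l, ∀ i, φ l i ∈ harmSub n l)
    (hφon : ∀ l, ∀ i i', sphInner n (φ l i) (φ l i') = if i = i' then 1 else 0) :
    PolOn n e (suppSpheres n X) = Submodule.span ℝ (Set.range fun a : SysIdx n e p =>
      polyRestrict n (suppSpheres n X) (sysPoly g φ a)) := by
  apply le_antisymm
  · set T := Submodule.span ℝ (Set.range fun a : SysIdx n e p =>
      polyRestrict n (suppSpheres n X) (sysPoly g φ a)) with hT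
    have hbase : ∀ l k, l + 2 * k ≤ e → ∀ i,
        polyRestrict n (suppSpheres n X) (rsq n ^ k * φ l i) ∈ T := by
      intro l k hlk i
      obtain ⟨c, hc⟩ := exists_pow_eq_sum hp (g l) (hgdeg l (by omega)) (hgon l (by omega))
        (show k ≤ (e - l) / 2 by omega)
      have : polyRestrict n (suppSpheres n X) (rsq n ^ k * φ l i) =
          ∑ j : Fin (min p ((e - l) / 2 + 1)), c j • polyRestrict n (suppSpheres n X)
            (sysPoly g φ (⟨⟨l, by omega⟩, j, i⟩ : SysIdx n e p)) := by
        funext s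
        have hs : ‖(s : Euc n)‖ ∈ X.image fun x => ‖x‖ := by
          obtain ⟨r, hr, hsr⟩ := Set.mem_iUnion₂.1 s.2
          rw [mem_sphere_zero_iff_norm] at hsr
          rwa [hsr]
        have h := hc _ hs
        rw [← evalPt_rsq, Finset.sum_range] at h
        have hpow : evalPt (s : Euc n) (rsq n ^ k) = evalPt (s : Euc n) (rsq n) ^ k := by
          simp [evalPt]
        simp only [Finset.sum_apply, Pi.smul_apply, smul_eq_mul, polyRestrict, LinearMap.coe_mk,
          AddHom.coe_mk, sysPoly, evalPt_mul, evalPt_aeval_rsq, hpow, h, Finset.sum_mul]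
        rw [evalPt_rsq]
        exact Finset.sum_congr rfl fun j _ => by ring
      rw [this]
      exact Submodule.sum_mem _ fun j _ =>
        Submodule.smul_mem _ _ (Submodule.subset_span ⟨_, rfl⟩)
    have hharm : ∀ l k, l + 2 * k ≤ e → ∀ h ∈ harmSub n l,
        polyRestrict n (suppSpheres n X) (rsq n ^ k * h) ∈ T := by
      intro l k hlk h hh
      have h1 := harm_mem_span (sphMean n hfin) (φ l) (hφmem l)
        (fun i i' => by rw [← sphInner_eq_sphMean, hφon]) hh
      have h2 : Submodule.span ℝ (Set.range (φ l)) ≤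
          T.comap (polyRestrict n (suppSpheres n X) ∘ₗ LinearMap.mulLeft ℝ (rsq n ^ k)) := by
        rw [Submodule.span_le]
        rintro _ ⟨i, rfl⟩
        exact hbase l k hlk i
      exact h2 h1
    rintro _ ⟨f, hf, rfl⟩
    have hf' : f.totalDegree ≤ e := (MvPolynomial.mem_restrictTotalDegree _ _ _).1 hf
    rw [← MvPolynomial.sum_homogeneousComponent f, map_sum]
    refine Submodule.sum_mem _ fun d hd => ?_
    have hd' := Finset.mem_range.1 hd
    have h2 := harmonic_decomposition hn d _ (MvPolynomial.homogeneousComponent_isHomogeneous d f)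
    have h3 : Submodule.span ℝ
        {q | ∃ j l h, l + 2 * j = d ∧ h ∈ harmSub n l ∧ q = rsq n ^ j * h} ≤
        T.comap (polyRestrict n (suppSpheres n X)) := by
      rw [Submodule.span_le]
      rintro _ ⟨k, l, h, hlk, hh, rfl⟩
      exact hharm l k (by omega) h hh
    exact h3 h2
  · rw [Submodule.span_le]
    rintro _ ⟨⟨l, j, i⟩, rfl⟩
    refine Submodule.mem_map_of_mem ((MvPolynomial.mem_restrictTotalDegree _ _ _).2 ?_)
    refine (MvPolynomial.totalDegree_mul _ _).trans ?_
    have hj := j.2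
    have hl := l.2
    have h1 := totalDegree_aeval_rsq_le n (g l j)
    have h2 := hgdeg l (by omega) j (by omega)
    have h3 := MvPolynomial.IsHomogeneous.totalDegree_le (hφmem l i).1
    dsimp only
    omega

theorem sysPoly_orthonormal {n e : ℕ} (hn : 1 ≤ n) {X : Finset (Euc n)} {w : Euc n → ℝ}
    (ht : IsEuclideanDesign n (2 * e) X w)
    (hfin : (μH[(n : ℝ) - 1] : Measure (Euc n)) (Metric.sphere 0 1) ≠ ⊤)
    (hpos : (μH[(n : ℝ) - 1] : Measure (Euc n)) (Metric.sphere 0 1) ≠ 0)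
    {p : ℕ} {g : ℕ → ℕ → Polynomial ℝ}
    (hgdeg : ∀ l ≤ e, ∀ j < p, (g l j).natDegree ≤ j)
    (hgon : ∀ l ≤ e, ∀ j < p, ∀ j' < p,
      (∑ x ∈ X, w x * ‖x‖ ^ (2 * l) * (g l j).eval (‖x‖ ^ 2) * (g l j').eval (‖x‖ ^ 2))
        = if j = j' then 1 else 0)
    {φ : (l : ℕ) → Fin (Module.finrank ℝ (harmSub n l)) → MvPolynomial (Fin n) ℝ}
    (hφmem : ∀ l, ∀ i, φ l i ∈ harmSub n l)
    (hφon : ∀ l, ∀ i i', sphInner n (φ l i) (φ l i') = if i = i' then 1 else 0)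
    (a b : SysIdx n e p) :
    ∑ x ∈ X, w x * evalPt x (sysPoly g φ a) * evalPt x (sysPoly g φ b) =
      if a = b then 1 else 0 := by
  obtain ⟨l, j, i⟩ := a
  obtain ⟨l', j', i'⟩ := b
  have hj := j.2
  have hj' := j'.2
  have hl := l.2
  have hl' := l'.2
  simp only [sysPoly]
  rw [design_inner ht hn hfin hpos (hgdeg l (by omega) j (by omega))
    (hgdeg l' (by omega) j' (by omega)) (by omega) (by omega) (hφmem l i).1 (hφmem l' i').1]
  by_cases hll : l = l'
  · subst hll
    rw [← two_mul, hgon l (by omega) j (by omega) j' (by omega), ← sphInner_eq_sphMean, hφon]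
    by_cases hjj : j = j'
    · by_cases hii : i = i'
      · simp [hjj, hii]
      · simp [hii]
    · have : (j : ℕ) ≠ j' := fun h => hjj (Fin.ext h)
      simp [hjj, this]
  · rw [harm_orthogonal hn (sphMean n hfin) (sphMean_rotSub hfin)
      (fun d P hd hP => sphMean_odd hfin d P hd hP) (sphMean_rsq_mul hfin)
      (fun h => hll (Fin.ext h)) (hφmem l i) (hφmem l' i'), mul_zero,
      if_neg (fun h => hll (congrArg Sigma.fst h))]

/-- Tightness makes the system as large as `X`, as it is linearly independent (already on `X`) and
spans `Pol_e(S)`. -/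
theorem card_sysIdx {n e : ℕ} {X : Finset (Euc n)} {w : Euc n → ℝ}
    (hcard : X.card = dimPolOn n e (suppSpheres n X)) {p : ℕ}
    {P : SysIdx n e p → MvPolynomial (Fin n) ℝ}
    (hspan : PolOn n e (suppSpheres n X) = Submodule.span ℝ (Set.range fun a : SysIdx n e p =>
      polyRestrict n (suppSpheres n X) (P a)))
    (hon : ∀ a b, ∑ x ∈ X, w x * evalPt x (P a) * evalPt x (P b) = if a = b then 1 else 0) :
    Fintype.card (SysIdx n e p) = X.card := by
  have hli : LinearIndependent ℝ fun a : SysIdx n e p =>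
      polyRestrict n (suppSpheres n X) (P a) := by
    rw [Fintype.linearIndependent_iff]
    intro c hc b
    have h0 : ∀ x ∈ X, ∑ a, c a * evalPt x (P a) = 0 := by
      intro x hx
      have hxS : x ∈ suppSpheres n X :=
        Set.mem_iUnion₂.2 ⟨‖x‖, Finset.mem_image_of_mem _ hx, by simp⟩
      have := congrFun hc ⟨x, hxS⟩
      simpa [polyRestrict] using this
    have h1 : ∑ a, c a * ∑ x ∈ X, w x * evalPt x (P a) * evalPt x (P b) = 0 := by
      simp only [Finset.mul_sum]
      rw [Finset.sum_comm]
      refine Finset.sum_eq_zero fun x hx => ?_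
      calc ∑ a, c a * (w x * evalPt x (P a) * evalPt x (P b))
          = (∑ a, c a * evalPt x (P a)) * (w x * evalPt x (P b)) := by
            rw [Finset.sum_mul]
            exact Finset.sum_congr rfl fun a _ => by ring
        _ = 0 := by rw [h0 x hx, zero_mul]
    simpa [hon] using h1
  rw [hcard, dimPolOn, hspan, finrank_span_eq_card hli]

/-- The addition formula on the diagonal, extended to all of `ℝⁿ` by homogeneity. -/
theorem sum_sq_harm {n l : ℕ} (hl : l ≠ 0)
    {φ : Fin (Module.finrank ℝ (harmSub n l)) → MvPolynomial (Fin n) ℝ}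
    (hφmem : ∀ i, φ i ∈ harmSub n l) {q : Polynomial ℝ}
    (hq : ∀ u v : Euc n, ‖u‖ = 1 → ‖v‖ = 1 →
      (∑ i, evalPt u (φ i) * evalPt v (φ i)) = q.eval ⟪u, v⟫) (u : Euc n) :
    ∑ i, evalPt u (φ i) ^ 2 = ‖u‖ ^ (2 * l) * q.eval 1 := by
  by_cases hu : u = 0
  · subst hu
    rw [norm_zero, zero_pow (by omega), zero_mul]
    refine Finset.sum_eq_zero fun i _ => ?_
    have := evalPt_smul_point (0 : Euc n) (hφmem i).1 0
    rw [zero_pow hl, zero_mul, smul_zero] at this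
    rw [this]; ring
  · have hu' : ‖u‖ ≠ 0 := norm_ne_zero_iff.2 hu
    have h1 : ‖(‖u‖⁻¹ • u : Euc n)‖ = 1 := by
      rw [norm_smul, norm_inv, norm_norm, inv_mul_cancel₀ hu']
    have h2 := hq _ _ h1 h1
    rw [real_inner_self_eq_norm_sq, h1, one_pow] at h2
    rw [← h2, Finset.mul_sum]
    refine Finset.sum_congr rfl fun i _ => ?_
    rw [evalPt_smul_point u (hφmem i).1, inv_pow]
    field_simp
    ring

/-! ### The weight identity -/

/-- Lemma 2.16(1). Let `(X, w)` be a tight Euclidean `2e`-design on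
`p` concentric spheres, let `g_{l,j}` be the Gram–Schmidt orthonormal family of
polynomials in `‖x‖²` (with respect to `⟨f, g⟩_l = ∑_{x ∈ X} w(x)‖x‖^{2l} f(x)g(x)`),
let `{φ_{l,i}}` be an orthonormal basis of `Harm_l(ℝⁿ)` and `Q_l` the Gegenbauer
polynomial normalized by the addition formula `∑ᵢ φ_{l,i}(u)φ_{l,i}(v) = Q_l(⟨u,v⟩)`
for unit vectors `u, v`. Then for every `u ∈ X`,
`∑_{1 ≤ l ≤ e} ∑_{0 ≤ j ≤ min{p-ε_S-1, ⌊(e-l)/2⌋}} ‖u‖^{2l} g_{l,j}(u)² Q_l(1)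
  + ∑_{0 ≤ j ≤ min{p-1, ⌊e/2⌋}} g_{0,j}(u)² = 1/w(u)`. -/
theorem tight_design_weight_identity (n e : ℕ)
    (X : Finset (Euc n)) (w : Euc n → ℝ)
    (hne : X.Nonempty) (hw : ∀ x ∈ X, 0 < w x)
    (ht : IsTightOnS n e X w)
    (p : ℕ) (hp : p = (X.image (fun x => ‖x‖)).card)
    (ε : ℕ) (hε : ε = if (0 : Euc n) ∈ X then 1 else 0)
    (g : ℕ → ℕ → Polynomial ℝ)
    (hgdeg : ∀ l ≤ e, ∀ j < p, (g l j).natDegree ≤ j)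
    (hgon : ∀ l ≤ e, ∀ j < p, ∀ j' < p,
      (∑ x ∈ X, w x * ‖x‖ ^ (2 * l) * (g l j).eval (‖x‖ ^ 2) * (g l j').eval (‖x‖ ^ 2))
        = if j = j' then 1 else 0)
    (φ : (l : ℕ) → Fin (Module.finrank ℝ (harmSub n l)) → MvPolynomial (Fin n) ℝ)
    (hφmem : ∀ l, ∀ i, φ l i ∈ harmSub n l)
    (hφon : ∀ l, ∀ i i', sphInner n (φ l i) (φ l i') = if i = i' then 1 else 0)
    (Q : ℕ → Polynomial ℝ)
    (hQ : ∀ l : ℕ, ∀ u v : Euc n, ‖u‖ = 1 → ‖v‖ = 1 →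
      (∑ i, evalPt u (φ l i) * evalPt v (φ l i)) = (Q l).eval ⟪u, v⟫) :
    ∀ u ∈ X,
      (∑ l ∈ Finset.Icc 1 e, ∑ j ∈ Finset.range (min (p - ε) ((e - l) / 2 + 1)),
          ‖u‖ ^ (2 * l) * ((g l j).eval (‖u‖ ^ 2)) ^ 2 * (Q l).eval 1)
        + (∑ j ∈ Finset.range (min p (e / 2 + 1)), ((g 0 j).eval (‖u‖ ^ 2)) ^ 2)
      = 1 / w u := by
  intro u hu
  have hidx : 0 < Module.finrank ℝ (harmSub n 0) := by rw [finrank_harm_zero]; exact one_pos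
  obtain ⟨hn, hfin, hpos⟩ := sphere_measure_of_orthonormal (hφmem 0 ⟨0, hidx⟩)
    (by rw [hφon]; simp)
  -- the truncation by `ε` is vacuous: `0 ∈ X` is impossible as soon as some `l ≥ 1` occurs
  have hε0 : 1 ≤ e → ε = 0 := fun he => by
    rw [hε, if_neg (zero_notMem_of_orthonormal one_ne_zero hp (g 1) (hgdeg 1 he) (hgon 1 he))]
  have hon := sysPoly_orthonormal hn ht.1 hfin hpos hgdeg hgon hφmem hφon
  have hcard := card_sysIdx ht.2 (polOn_eq_span hn hfin hp hgdeg hgon hφmem hφon) hon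
  have key := sum_sq_eq_one_of_orthonormal (β := X) (by rw [hcard, Fintype.card_coe])
    (fun (a : SysIdx n e p) (x : X) => evalPt (x : Euc n) (sysPoly g φ a)) (fun x => w x)
    (fun a b => by
      rw [Finset.sum_coe_sort X fun x =>
        w x * evalPt x (sysPoly g φ a) * evalPt x (sysPoly g φ b), hon a b]
      congr) ⟨u, hu⟩
  have hzero : ∑ i, evalPt u (φ 0 i) ^ 2 = 1 := by
    have h1 : ∀ i, evalPt u (φ 0 i) ^ 2 = 1 := by
      intro i
      obtain ⟨c, hc⟩ := harm_zero (hφmem 0 i)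
      have h2 := hφon 0 i i
      rw [if_pos rfl, sphInner_eq_sphMean hfin, hc, ← map_mul, sphMean_C hfin hpos] at h2
      rw [hc, evalPt, MvPolynomial.eval_C, sq, h2]
    simp [h1, finrank_harm_zero]
  have hsum : ∑ a : SysIdx n e p, evalPt u (sysPoly g φ a) ^ 2 =
      ∑ l ∈ Finset.range (e + 1), ∑ j ∈ Finset.range (min p ((e - l) / 2 + 1)),
        (g l j).eval (‖u‖ ^ 2) ^ 2 * ∑ i, evalPt u (φ l i) ^ 2 := by
    rw [Fintype.sum_sigma, Finset.sum_range]
    refine Finset.sum_congr rfl fun l _ => ?_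
    rw [Fintype.sum_prod_type, Finset.sum_range]
    refine Finset.sum_congr rfl fun j _ => ?_
    rw [Finset.mul_sum]
    refine Finset.sum_congr rfl fun i _ => ?_
    rw [sysPoly, evalPt_mul, evalPt_aeval_rsq, mul_pow]
  have hIcc : Finset.Ico (0 + 1) (e + 1) = Finset.Icc 1 e := by
    ext l; simp only [Finset.mem_Ico, Finset.mem_Icc]; omega
  rw [Finset.range_eq_Ico, Finset.sum_eq_sum_Ico_succ_bot (by omega), hIcc, hzero,
    Nat.sub_zero] at hsum
  rw [eq_div_iff (hw u hu).ne', mul_comm]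
  refine Eq.trans ?_ key
  simp only [hsum]
  rw [add_comm]
  congr 2
  · simp
  · refine Finset.sum_congr rfl fun l hl => ?_
    rw [Finset.mem_Icc] at hl
    rw [hε0 (by omega), Nat.sub_zero]
    refine Finset.sum_congr rfl fun j _ => ?_
    rw [sum_sq_harm (by omega) (hφmem l) (hQ l)]
    ring

end
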